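/- Let α ∈ (0, 3] and let h ∈ F(α). Then there exists a Borel probability measure μ on the unit circle 𝕋 such that h'(z) = exp(−α·∫_𝕋 Log(1 − zζ) dμ(ζ)) for all z ∈ 𝔻, where Log denotes the principal complex logarithm. -/

import Mathlib

open Complex Metric MeasureTheory

/-- Membership in the family `F(α)`. -/
def MemF (α : ℝ) (h : ℂ → ℂ) : Prop :=
  DifferentiableOn ℂ h (ball 0 1) ∧ h 0 = 0 ∧ deriv h 0 = 1 ∧
  (∀ z ∈ ball (0:ℂ) 1, deriv h z ≠ 0) ∧
  (∀ z ∈ ball (0:ℂ) 1, 1 - α / 2 < (1 + z * deriv (deriv h) z / deriv h z).re)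

/-!
The function `1 + (2 / α) z h''(z) / h'(z)` has nonnegative real part, so Herglotz's theorem writes
it as `∫ (1 + zζ) / (1 - zζ) dμ(ζ)` for a probability measure `μ` on the circle. This says exactly
that `h'` and `exp (-α ∫ Log (1 - zζ) dμ(ζ))` have the same logarithmic derivative, and both equal
`1` at the origin.

For Herglotz's theorem, a function `f` that is continuous up to the boundary is recovered from the
density `Re f` on the circle by the Schwarz integral formula; a general `f` is approximated by its
dilations `z ↦ f (r z)`, and the measures they yield have a weak-* limit point as `r → 1`.
-/

open Filter Set Topology
open Real (circleAverage)

section ProbabilityMeasures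

variable {X E : Type*} [MeasurableSpace X] [NormedAddCommGroup E] [NormedSpace ℝ E]

theorem exists_probabilityMeasure_integral_eq_integral_smul {ν : Measure X} {u : X → ℝ}
    (hu : Integrable u ν) (hu_nonneg : 0 ≤ᵐ[ν] u) (hu_integral : ∫ x, u x ∂ν = 1) :
    ∃ μ : ProbabilityMeasure X, ∀ g : X → E, ∫ x, g x ∂(μ : Measure X) = ∫ x, u x • g x ∂ν := by
  have hprob : IsProbabilityMeasure (ν.withDensity fun x ↦ ENNReal.ofReal (u x)) := by
    constructor
    rw [withDensity_apply _ MeasurableSet.univ, Measure.restrict_univ,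
      ← ofReal_integral_eq_lintegral_ofReal hu hu_nonneg, hu_integral, ENNReal.ofReal_one]
  refine ⟨⟨_, hprob⟩, fun g ↦ ?_⟩
  rw [ProbabilityMeasure.coe_mk, integral_withDensity_eq_integral_toReal_smul₀
    hu.aemeasurable.ennreal_ofReal (ae_of_all _ fun _ ↦ ENNReal.ofReal_lt_top)]
  refine integral_congr_ae (hu_nonneg.mono fun x hx ↦ ?_)
  simp only [ENNReal.toReal_ofReal hx]

theorem exists_probabilityMeasure_forall_integral_eq_of_tendsto [TopologicalSpace X]
    [CompactSpace X] [T2Space X] [BorelSpace X] {𝕜 ι κ : Type*} [RCLike 𝕜] {l : Filter κ} [l.NeBot]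
    {φ : ι → X → 𝕜} (hφ : ∀ i, Continuous (φ i)) {μ : κ → ProbabilityMeasure X} {L : ι → 𝕜}
    (hL : ∀ i, Tendsto (fun k ↦ ∫ x, φ i x ∂(μ k : Measure X)) l (𝓝 (L i))) :
    ∃ μ₀ : ProbabilityMeasure X, ∀ i, ∫ x, φ i x ∂(μ₀ : Measure X) = L i := by
  let U := Ultrafilter.of l
  have hμ : Tendsto μ U (𝓝 (U.map μ).lim) := (U.map μ).le_nhds_lim
  refine ⟨(U.map μ).lim, fun i ↦ ?_⟩
  have hlim := (ProbabilityMeasure.tendsto_iff_forall_integral_rclike_tendsto 𝕜).1 hμ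
    (BoundedContinuousFunction.mkOfCompact ⟨φ i, hφ i⟩)
  exact tendsto_nhds_unique hlim ((hL i).mono_left (Ultrafilter.of_le l))

end ProbabilityMeasures

section CircleMeasure

/-- The normalized arc length measure on the circle with centre `c` and radius `R`, so that
integrals against it are circle averages. -/
noncomputable def circleMeasure (c : ℂ) {R : ℝ} (hR : 0 ≤ R) : Measure (sphere c R) :=
  (ENNReal.ofReal (2 * Real.pi)⁻¹ • volume.restrict (Ioc 0 (2 * Real.pi))).map
    fun θ ↦ ⟨circleMap c R θ, circleMap_mem_sphere c hR θ⟩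

variable {c : ℂ} {R : ℝ} {E : Type*} [NormedAddCommGroup E] [NormedSpace ℝ E]

instance isFiniteMeasure_circleMeasure (hR : 0 ≤ R) :
    IsFiniteMeasure (circleMeasure c hR) := by
  have : IsFiniteMeasure
      (ENNReal.ofReal (2 * Real.pi)⁻¹ • volume.restrict (Ioc 0 (2 * Real.pi))) :=
    Measure.smul_finite _ ENNReal.ofReal_ne_top
  unfold circleMeasure
  infer_instance

theorem integral_circleMeasure (hR : 0 ≤ R) {f : ℂ → E} (hf : ContinuousOn f (sphere c R)) :
    ∫ ζ : sphere c R, f ζ ∂circleMeasure c hR = circleAverage f c R := by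
  have hmap : Measurable fun θ ↦ (⟨circleMap c R θ, circleMap_mem_sphere c hR θ⟩ : sphere c R) :=
    ((continuous_circleMap c R).subtype_mk _).measurable
  have hf' : Continuous fun ζ : sphere c R ↦ f ζ := continuousOn_iff_continuous_domRestrict.1 hf
  rw [circleMeasure, integral_map hmap.aemeasurable hf'.aestronglyMeasurable, integral_smul_measure,
    ENNReal.toReal_ofReal (by positivity), ← intervalIntegral.integral_of_le Real.two_pi_pos.le,
    Real.circleAverage_def]

theorem exists_probabilityMeasure_integral_eq_circleAverage_smul (hR : 0 ≤ R) {u : ℂ → ℝ}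
    (hu : ContinuousOn u (sphere c R)) (hu_nonneg : ∀ ζ ∈ sphere c R, 0 ≤ u ζ)
    (hu_average : circleAverage u c R = 1) :
    ∃ μ : ProbabilityMeasure (sphere c R), ∀ f : ℂ → E, ContinuousOn f (sphere c R) →
      ∫ ζ, f ζ ∂(μ : Measure (sphere c R)) = circleAverage (fun ζ ↦ u ζ • f ζ) c R := by
  have hu_int : Integrable (fun ζ : sphere c R ↦ u ζ) (circleMeasure c hR) :=
    (BoundedContinuousFunction.mkOfCompact
      ⟨_, continuousOn_iff_continuous_domRestrict.1 hu⟩).integrable _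
  obtain ⟨μ, hμ⟩ := exists_probabilityMeasure_integral_eq_integral_smul (E := E) hu_int
    (ae_of_all _ fun ζ ↦ hu_nonneg ζ ζ.2) ((integral_circleMeasure hR hu).trans hu_average)
  exact ⟨μ, fun f hf ↦ (hμ _).trans (integral_circleMeasure hR (hu.smul hf))⟩

end CircleMeasure

section Herglotz

variable {f : ℂ → ℂ} {R : ℝ} {w : ℂ}

theorem circleAverage_re_eq_re_center {c : ℂ} (hR : 0 < R) (hf : DiffContOnCl ℂ f (ball c R)) :
    circleAverage (fun ζ ↦ (f ζ).re) c R = (f c).re := by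
  have hf_sphere : ContinuousOn f (sphere c R) :=
    hf.continuousOn_ball.mono sphere_subset_closedBall
  rw [← DiffContOnCl.circleAverage (f := f) (R := R) ((abs_of_pos hR).symm ▸ hf)]
  exact reCLM.circleAverage_comp_comm (hf_sphere.circleIntegrable hR.le)

theorem re_circleAverage_herglotzRieszKernel_smul_re (hf : DiffContOnCl ℂ f (ball 0 R))
    (hw : w ∈ ball 0 R) :
    (circleAverage (fun ζ ↦ herglotzRieszKernel 0 w ζ • ((f ζ).re : ℂ)) 0 R).re = (f w).re := by
  have hR : 0 < R := pos_of_mem_ball hw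
  have hf_sphere : ContinuousOn f (sphere 0 R) := hf.continuousOn_ball.mono sphere_subset_closedBall
  have hre_int : CircleIntegrable (fun ζ ↦ (f ζ).re) 0 R :=
    (continuous_re.comp_continuousOn hf_sphere).circleIntegrable hR.le
  have hpoisson_int : CircleIntegrable ((re ∘ herglotzRieszKernel 0 w) • f) 0 R := by
    refine ContinuousOn.circleIntegrable hR.le (.smul ?_ hf_sphere)
    exact continuous_re.comp_continuousOn
      (abs_of_pos hR ▸ continuousOn_herglotzRieszKernel_sphere hw)
  rw [re_circleAverage_herglotzRieszKernel_smul hre_int hw,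
    ← hf.circleAverage_re_herglotzRieszKernel_smul hw]
  simpa [Function.comp_def, Pi.mul_def, Pi.smul_def'] using
    reCLM.circleAverage_comp_comm hpoisson_int

theorem circleAverage_herglotzRieszKernel_smul_re_center (hR : 0 < R)
    (hf : DiffContOnCl ℂ f (ball 0 R)) :
    circleAverage (fun ζ ↦ herglotzRieszKernel 0 0 ζ • ((f ζ).re : ℂ)) 0 R = (f 0).re := by
  have hre_int : CircleIntegrable (fun ζ ↦ (f ζ).re) 0 R :=
    (continuous_re.comp_continuousOn
      (hf.continuousOn_ball.mono sphere_subset_closedBall)).circleIntegrable hR.le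
  have hkernel : EqOn (fun ζ ↦ herglotzRieszKernel 0 0 ζ • ((f ζ).re : ℂ)) (fun ζ ↦ ((f ζ).re : ℂ))
      (sphere 0 |R|) := by
    intro ζ hζ
    have hζ_ne : ζ ≠ 0 := ne_of_mem_sphere hζ (abs_pos.2 hR.ne').ne'
    simp [herglotzRieszKernel_def, hζ_ne]
  rw [Real.circleAverage_congr_sphere hkernel, ← circleAverage_re_eq_re_center hR hf]
  exact ofRealCLM.circleAverage_comp_comm hre_int

theorem circleAverage_herglotzRieszKernel_smul_re (hf : DiffContOnCl ℂ f (ball 0 R))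
    (hw : w ∈ ball 0 R) :
    circleAverage (fun ζ ↦ herglotzRieszKernel 0 w ζ • ((f ζ).re : ℂ)) 0 R
      = f w - (f 0).im * I := by
  have hR : 0 < R := pos_of_mem_ball hw
  have hre_int : CircleIntegrable (fun ζ ↦ ((f ζ).re : ℂ)) 0 R :=
    ((continuous_ofReal.comp continuous_re).comp_continuousOn
      (hf.continuousOn_ball.mono sphere_subset_closedBall)).circleIntegrable hR.le
  -- Both sides are analytic with the same real part, so they differ by a constant, found at `0`.
  obtain ⟨a, ha⟩ := AnalyticOnNhd.eq_const_of_re_eq_const (c₀ := 0)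
    ((hf.differentiableOn.analyticOnNhd isOpen_ball).sub
      (analyticOnNhd_circleAverage_herglotzRieszKernel_smul hre_int))
    (fun z hz ↦ sub_eq_zero.2 (re_circleAverage_herglotzRieszKernel_smul_re hf hz).symm)
    isOpen_ball ((convex_ball 0 R).isConnected ⟨w, hw⟩)
  have hconst := (ha w hw).trans (ha 0 (mem_ball_self hR)).symm
  simp only [Pi.sub_apply, circleAverage_herglotzRieszKernel_smul_re_center hR hf] at hconst
  linear_combination -hconst + re_add_im (f 0)

theorem exists_probabilityMeasure_integral_herglotzRieszKernel_eq_of_diffContOnCl (hR : 0 < R)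
    (hf : DiffContOnCl ℂ f (ball 0 R)) (hf_nonneg : ∀ ζ ∈ sphere 0 R, 0 ≤ (f ζ).re)
    (hf_zero_re : (f 0).re = 1) :
    ∃ μ : ProbabilityMeasure (sphere (0 : ℂ) R), ∀ w ∈ ball 0 R,
      ∫ ζ, herglotzRieszKernel 0 w ζ ∂(μ : Measure (sphere (0 : ℂ) R)) = f w - (f 0).im * I := by
  have hf_sphere : ContinuousOn f (sphere 0 R) :=
    hf.continuousOn_ball.mono sphere_subset_closedBall
  obtain ⟨μ, hμ⟩ := exists_probabilityMeasure_integral_eq_circleAverage_smul (E := ℂ) hR.le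
    (continuous_re.comp_continuousOn hf_sphere) hf_nonneg
    ((circleAverage_re_eq_re_center hR hf).trans hf_zero_re)
  refine ⟨μ, fun w hw ↦ ?_⟩
  rw [hμ _ (abs_of_pos hR ▸ continuousOn_herglotzRieszKernel_sphere hw),
    ← circleAverage_herglotzRieszKernel_smul_re hf hw]
  simp only [Function.comp_apply, real_smul, smul_eq_mul, mul_comm]

theorem exists_probabilityMeasure_integral_herglotzRieszKernel_eq (hR : 0 < R)
    (hf : DifferentiableOn ℂ f (ball 0 R)) (hf_nonneg : ∀ w ∈ ball 0 R, 0 ≤ (f w).re)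
    (hf_zero_re : (f 0).re = 1) :
    ∃ μ : ProbabilityMeasure (sphere (0 : ℂ) R), ∀ w ∈ ball 0 R,
      ∫ ζ, herglotzRieszKernel 0 w ζ ∂(μ : Measure (sphere (0 : ℂ) R)) = f w - (f 0).im * I := by
  obtain ⟨r, -, hr, hr_tendsto⟩ := exists_seq_strictMono_tendsto' (zero_lt_one' ℝ)
  have hmaps (n : ℕ) : MapsTo (fun z : ℂ ↦ r n * z) (closedBall 0 R) (ball 0 R) := by
    intro z hz
    rw [mem_closedBall_zero_iff] at hz
    rw [mem_ball_zero_iff, norm_mul, norm_real, Real.norm_of_nonneg (hr n).1.le]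
    nlinarith [(hr n).1, (hr n).2]
  have hdilation (n : ℕ) : ∃ μ : ProbabilityMeasure (sphere (0 : ℂ) R), ∀ w ∈ ball 0 R,
      ∫ ζ, herglotzRieszKernel 0 w ζ ∂(μ : Measure (sphere (0 : ℂ) R))
        = f (r n * w) - (f 0).im * I := by
    have hfr : DiffContOnCl ℂ (fun z ↦ f (r n * z)) (ball 0 R) :=
      (hf.comp (by fun_prop) (hmaps n)).diffContOnCl_ball subset_rfl
    simpa only [mul_zero] using
      exists_probabilityMeasure_integral_herglotzRieszKernel_eq_of_diffContOnCl hR hfr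
        (fun ζ hζ ↦ hf_nonneg _ (hmaps n (sphere_subset_closedBall hζ))) (by rwa [mul_zero])
  choose μ hμ using hdilation
  have hlim (w : ball (0 : ℂ) R) :
      Tendsto (fun n ↦ ∫ ζ, herglotzRieszKernel 0 w ζ ∂(μ n : Measure (sphere (0 : ℂ) R))) atTop
        (𝓝 (f w - (f 0).im * I)) := by
    simp only [hμ _ w w.2]
    have hrw : Tendsto (fun n ↦ (r n : ℂ) * w) atTop (𝓝 w) := by
      simpa using ((continuous_ofReal.tendsto 1).comp hr_tendsto).mul_const (w : ℂ)
    exact ((hf.continuousOn.continuousAt (isOpen_ball.mem_nhds w.2)).tendsto.comp hrw).sub_const _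
  obtain ⟨μ₀, hμ₀⟩ := exists_probabilityMeasure_forall_integral_eq_of_tendsto
    (fun w : ball (0 : ℂ) R ↦ continuousOn_iff_continuous_domRestrict.1
      (abs_of_pos hR ▸ continuousOn_herglotzRieszKernel_sphere w.2)) hlim
  exact ⟨μ₀, fun w hw ↦ hμ₀ ⟨w, hw⟩⟩

theorem exists_probabilityMeasure_integral_one_add_mul_div_one_sub_mul_eq
    (hf : DifferentiableOn ℂ f (ball 0 1)) (hf_nonneg : ∀ z ∈ ball 0 1, 0 ≤ (f z).re)
    (hf_zero_re : (f 0).re = 1) :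
    ∃ μ : ProbabilityMeasure (sphere (0 : ℂ) 1), ∀ z ∈ ball (0 : ℂ) 1,
      ∫ ζ, (1 + z * (ζ : ℂ)) / (1 - z * ζ) ∂(μ : Measure (sphere (0 : ℂ) 1))
        = f z - (f 0).im * I := by
  obtain ⟨μ, hμ⟩ :=
    exists_probabilityMeasure_integral_herglotzRieszKernel_eq one_pos hf hf_nonneg hf_zero_re
  -- Inversion turns the kernel `(ζ + z) / (ζ - z)` into `(1 + z * ζ) / (1 - z * ζ)`.
  refine ⟨μ.map (MeasurableEquiv.inv (sphere (0 : ℂ) 1)).measurable.aemeasurable, fun z hz ↦ ?_⟩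
  rw [← hμ z hz, ProbabilityMeasure.toMeasure_map, integral_map_equiv]
  refine integral_congr_ae (ae_of_all _ fun ζ ↦ ?_)
  have hζ : (ζ : ℂ) ≠ 0 := ne_zero_of_mem_unit_sphere ζ
  simp only [MeasurableEquiv.inv_apply, unitSphere.coe_inv, herglotzRieszKernel_def, sub_zero]
  field_simp

end Herglotz

section LogPotential

variable {Ω : Type*} [MeasurableSpace Ω] {μ : Measure Ω} {φ : Ω → ℂ} {z : ℂ}

theorem one_sub_mul_mem_slitPlane {z w : ℂ} (hz : ‖z‖ < 1) (hw : ‖w‖ ≤ 1) :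
    1 - z * w ∈ slitPlane := by
  rw [sub_eq_add_neg]
  refine mem_slitPlane_of_norm_lt_one ?_
  rw [norm_neg, norm_mul]
  exact mul_lt_one_of_nonneg_of_lt_one_left (norm_nonneg z) hz hw

theorem norm_div_one_sub_mul_le {z w : ℂ} {ρ : ℝ} (hz : ‖z‖ ≤ ρ) (hρ : ρ < 1) (hw : ‖w‖ ≤ 1) :
    ‖w / (1 - z * w)‖ ≤ (1 - ρ)⁻¹ := by
  have hzw : ‖z * w‖ ≤ ρ := by
    rw [norm_mul]
    exact (mul_le_of_le_one_right (norm_nonneg z) hw).trans hz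
  have hdenom : 1 - ρ ≤ ‖1 - z * w‖ := by
    have htriangle := norm_sub_norm_le 1 (z * w)
    rw [norm_one] at htriangle
    linarith
  rw [norm_div, inv_eq_one_div]
  exact div_le_div₀ zero_le_one hw (sub_pos.2 hρ) hdenom

theorem integrable_log_one_sub_mul [IsFiniteMeasure μ] (hφ : AEMeasurable φ μ)
    (hφ_le : ∀ᵐ ω ∂μ, ‖φ ω‖ ≤ 1) (hz : ‖z‖ < 1) :
    Integrable (fun ω ↦ log (1 - z * φ ω)) μ := by
  refine .of_bound ((hφ.const_mul z).const_sub 1).clog.aestronglyMeasurable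
    (‖z‖ ^ 2 * (1 - ‖z‖)⁻¹ / 2 + ‖z‖) (hφ_le.mono fun ω hω ↦ ?_)
  have hzφ : ‖-(z * φ ω)‖ ≤ ‖z‖ := by
    rw [norm_neg, norm_mul]
    exact mul_le_of_le_one_right (norm_nonneg z) hω
  have hpos : 0 < 1 - ‖z‖ := sub_pos.2 hz
  rw [sub_eq_add_neg]
  refine (norm_log_one_add_le (hzφ.trans_lt hz)).trans ?_
  gcongr
  exact inv_nonneg.2 (hpos.le.trans (sub_le_sub_left hzφ 1))

theorem integrable_div_one_sub_mul [IsFiniteMeasure μ] (hφ : AEMeasurable φ μ)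
    (hφ_le : ∀ᵐ ω ∂μ, ‖φ ω‖ ≤ 1) (hz : ‖z‖ < 1) :
    Integrable (fun ω ↦ φ ω / (1 - z * φ ω)) μ :=
  .of_bound (hφ.div ((hφ.const_mul z).const_sub 1)).aestronglyMeasurable _
    (hφ_le.mono fun _ hω ↦ norm_div_one_sub_mul_le le_rfl hz hω)

theorem hasDerivAt_integral_log_one_sub_mul [IsFiniteMeasure μ] (hφ : AEMeasurable φ μ)
    (hφ_le : ∀ᵐ ω ∂μ, ‖φ ω‖ ≤ 1) (hz : ‖z‖ < 1) :
    HasDerivAt (fun z ↦ ∫ ω, log (1 - z * φ ω) ∂μ) (-∫ ω, φ ω / (1 - z * φ ω) ∂μ) z := by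
  obtain ⟨ρ, hzρ, hρ⟩ := exists_between hz
  have hderiv : ∀ᵐ ω ∂μ, ∀ x ∈ ball 0 ρ,
      HasDerivAt (fun x ↦ log (1 - x * φ ω)) (-(φ ω / (1 - x * φ ω))) x := by
    refine hφ_le.mono fun ω hω x hx ↦ ?_
    have hlin : HasDerivAt (fun x ↦ 1 - x * φ ω) (-φ ω) x :=
      (hasDerivAt_mul_const (φ ω)).const_sub 1
    rw [← neg_div]
    exact hlin.clog (one_sub_mul_mem_slitPlane ((mem_ball_zero_iff.1 hx).trans hρ) hω)
  have hbound : ∀ᵐ ω ∂μ, ∀ x ∈ ball 0 ρ, ‖-(φ ω / (1 - x * φ ω))‖ ≤ (1 - ρ)⁻¹ := by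
    refine hφ_le.mono fun ω hω x hx ↦ ?_
    rw [norm_neg]
    exact norm_div_one_sub_mul_le (mem_ball_zero_iff.1 hx).le hρ hω
  rw [← integral_neg]
  exact (hasDerivAt_integral_of_dominated_loc_of_deriv_le
    (isOpen_ball.mem_nhds (mem_ball_zero_iff.2 hzρ))
    (.of_forall fun x ↦ ((hφ.const_mul x).const_sub 1).clog.aestronglyMeasurable)
    (integrable_log_one_sub_mul hφ hφ_le hz)
    (integrable_div_one_sub_mul hφ hφ_le hz).neg.aestronglyMeasurable
    hbound (integrable_const _) hderiv).2

theorem hasDerivAt_exp_neg_mul_integral_log_one_sub_mul [IsFiniteMeasure μ] (hφ : AEMeasurable φ μ)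
    (hφ_le : ∀ᵐ ω ∂μ, ‖φ ω‖ ≤ 1) (hz : ‖z‖ < 1) (a : ℂ) :
    HasDerivAt (fun z ↦ exp (-a * ∫ ω, log (1 - z * φ ω) ∂μ))
      (exp (-a * ∫ ω, log (1 - z * φ ω) ∂μ) * (a * ∫ ω, φ ω / (1 - z * φ ω) ∂μ)) z := by
  rw [← neg_mul_neg a]
  exact ((hasDerivAt_integral_log_one_sub_mul hφ hφ_le hz).const_mul (-a)).cexp

theorem integral_one_add_mul_div_one_sub_mul [IsProbabilityMeasure μ] (hφ : AEMeasurable φ μ)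
    (hφ_le : ∀ᵐ ω ∂μ, ‖φ ω‖ ≤ 1) (hz : ‖z‖ < 1) :
    ∫ ω, (1 + z * φ ω) / (1 - z * φ ω) ∂μ = 1 + 2 * z * ∫ ω, φ ω / (1 - z * φ ω) ∂μ := by
  have hsplit : ∀ᵐ ω ∂μ,
      (1 + z * φ ω) / (1 - z * φ ω) = 1 + 2 * z * (φ ω / (1 - z * φ ω)) := by
    refine hφ_le.mono fun ω hω ↦ ?_
    have hdenom : 1 - z * φ ω ≠ 0 := slitPlane_ne_zero (one_sub_mul_mem_slitPlane hz hω)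
    field_simp
    ring
  rw [integral_congr_ae hsplit, integral_add (integrable_const 1)
    ((integrable_div_one_sub_mul hφ hφ_le hz).const_mul _), integral_const_mul, integral_const,
    probReal_univ, one_smul]

theorem two_mul_mul_logDeriv_exp_neg_mul_integral_log_one_sub_mul [IsProbabilityMeasure μ]
    (hφ : AEMeasurable φ μ) (hφ_le : ∀ᵐ ω ∂μ, ‖φ ω‖ ≤ 1) (hz : ‖z‖ < 1) (a : ℂ) :
    2 * z * logDeriv (fun z ↦ exp (-a * ∫ ω, log (1 - z * φ ω) ∂μ)) z
      = a * (∫ ω, (1 + z * φ ω) / (1 - z * φ ω) ∂μ - 1) := by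
  rw [logDeriv_apply, (hasDerivAt_exp_neg_mul_integral_log_one_sub_mul hφ hφ_le hz a).deriv,
    mul_div_cancel_left₀ _ (exp_ne_zero _), integral_one_add_mul_div_one_sub_mul hφ hφ_le hz]
  ring

end LogPotential

theorem eqOn_of_eqOn_logDeriv_diff_singleton {p q : ℂ → ℂ} {U : Set ℂ} {z₀ : ℂ} (hU : IsOpen U)
    (hU_conn : IsPreconnected U) (hp : DifferentiableOn ℂ p U) (hq : DifferentiableOn ℂ q U)
    (hp_ne : ∀ z ∈ U, p z ≠ 0) (hq_ne : ∀ z ∈ U, q z ≠ 0)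
    (hpq : EqOn (logDeriv p) (logDeriv q) (U \ {z₀})) (hz₀ : z₀ ∈ U) (hpq₀ : p z₀ = q z₀) :
    EqOn p q U := by
  have hdense : U ⊆ closure (U \ {z₀}) :=
    (dense_compl_singleton z₀).open_subset_closure_inter hU
  have hlog : EqOn (logDeriv p) (logDeriv q) U :=
    hpq.of_subset_closure ((hp.deriv hU).div hp hp_ne).continuousOn
      ((hq.deriv hU).div hq hq_ne).continuousOn sdiff_subset hdense
  obtain ⟨c, -, hc⟩ := (logDeriv_eqOn_iff hp hq hU hU_conn hq_ne hp_ne).1 hlog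
  have hc_one : c = 1 := by
    have hcq : q z₀ = c * q z₀ := hpq₀.symm.trans (hc hz₀)
    exact (mul_eq_right₀ (hq_ne z₀ hz₀)).1 hcq.symm
  simpa only [hc_one, one_smul] using hc

theorem exists_probabilityMeasure_two_mul_mul_logDeriv_eq {α : ℝ} (hα : 0 < α) {p : ℂ → ℂ}
    (hp : DifferentiableOn ℂ p (ball 0 1)) (hp_ne : ∀ z ∈ ball 0 1, p z ≠ 0)
    (hp_re : ∀ z ∈ ball 0 1, -(α / 2) ≤ (z * logDeriv p z).re) :
    ∃ μ : ProbabilityMeasure (sphere (0 : ℂ) 1), ∀ z ∈ ball (0 : ℂ) 1,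
      2 * z * logDeriv p z
        = α * (∫ ζ, (1 + z * (ζ : ℂ)) / (1 - z * ζ) ∂(μ : Measure (sphere (0 : ℂ) 1)) - 1) := by
  have hf : DifferentiableOn ℂ (fun z ↦ 1 + ((2 / α : ℝ) : ℂ) * (z * logDeriv p z)) (ball 0 1) :=
    ((differentiableOn_id.mul ((hp.deriv isOpen_ball).div hp hp_ne)).const_mul _).const_add 1
  have hf_nonneg : ∀ z ∈ ball 0 1, 0 ≤ (1 + ((2 / α : ℝ) : ℂ) * (z * logDeriv p z)).re := by
    intro z hz
    rw [add_re, one_re, re_ofReal_mul]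
    have hscaled := mul_le_mul_of_nonneg_left (hp_re z hz) (div_pos two_pos hα).le
    field_simp at hscaled ⊢
    linarith
  obtain ⟨μ, hμ⟩ := exists_probabilityMeasure_integral_one_add_mul_div_one_sub_mul_eq hf hf_nonneg
    (by simp)
  refine ⟨μ, fun z hz ↦ ?_⟩
  have hα_ne : (α : ℂ) ≠ 0 := ofReal_ne_zero.2 hα.ne'
  rw [hμ z hz]
  simp only [zero_mul, mul_zero, add_zero, one_im, ofReal_zero, sub_zero, ofReal_div, ofReal_ofNat]
  field_simp
  ring

theorem stmt3_general {α : ℝ} (hα : 0 < α) {p : ℂ → ℂ} (hp : DifferentiableOn ℂ p (ball 0 1))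
    (hp_zero : p 0 = 1) (hp_ne : ∀ z ∈ ball 0 1, p z ≠ 0)
    (hp_re : ∀ z ∈ ball 0 1, -(α / 2) ≤ (z * logDeriv p z).re) :
    ∃ μ : Measure (sphere (0 : ℂ) 1), IsProbabilityMeasure μ ∧
      ∀ z ∈ ball (0 : ℂ) 1, p z = exp (-(α : ℂ) * ∫ ζ, log (1 - z * (ζ : ℂ)) ∂μ) := by
  obtain ⟨μ, hμ⟩ := exists_probabilityMeasure_two_mul_mul_logDeriv_eq hα hp hp_ne hp_re
  have hcoe : AEMeasurable (fun ζ : sphere (0 : ℂ) 1 ↦ (ζ : ℂ)) μ :=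
    measurable_subtype_coe.aemeasurable
  have hcoe_le : ∀ᵐ ζ : sphere (0 : ℂ) 1 ∂(μ : Measure (sphere (0 : ℂ) 1)), ‖(ζ : ℂ)‖ ≤ 1 :=
    ae_of_all _ fun ζ ↦ (mem_sphere_zero_iff_norm.1 ζ.2).le
  refine ⟨μ, inferInstance, eqOn_of_eqOn_logDeriv_diff_singleton isOpen_ball
    (convex_ball 0 1).isPreconnected hp (fun z hz ↦ ?_) hp_ne (fun _ _ ↦ exp_ne_zero _)
    (fun z hz ↦ ?_) (mem_ball_self one_pos) (by simp [hp_zero])⟩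
  · exact (hasDerivAt_exp_neg_mul_integral_log_one_sub_mul hcoe hcoe_le
      (mem_ball_zero_iff.1 hz) α).differentiableAt.differentiableWithinAt
  · refine mul_left_cancel₀ (mul_ne_zero two_ne_zero hz.2) ((hμ z hz.1).trans ?_)
    exact (two_mul_mul_logDeriv_exp_neg_mul_integral_log_one_sub_mul hcoe hcoe_le
      (mem_ball_zero_iff.1 hz.1) α).symm

theorem stmt3 (α : ℝ) (hα : α ∈ Set.Ioc (0:ℝ) 3) (h : ℂ → ℂ) (hF : MemF α h) :
    ∃ μ : Measure (sphere (0:ℂ) 1), IsProbabilityMeasure μ ∧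
      ∀ z ∈ ball (0:ℂ) 1,
        deriv h z = Complex.exp (-(α : ℂ) * ∫ ζ, Complex.log (1 - z * (ζ : ℂ)) ∂μ) := by
  obtain ⟨hd, -, h1, hne, hre⟩ := hF
  refine stmt3_general hα.1 (hd.deriv isOpen_ball) h1 hne fun z hz ↦ ?_
  have hre_z := hre z hz
  rw [add_re, one_re, mul_div_assoc, ← logDeriv_apply] at hre_z
  linarith
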